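/- Let $R_1$ be a commutative local ring with unity having four distinct units $u_1, u_2, u_3, u_4$ and three distinct non-zero elements $a, b, c$ of its maximal ideal, and let $F$ be a field with $|F| \geq 3$, with distinct units $v_1, v_2$. Then $\Gamma'(R_1 \times F)$ contains $K_{4,8}$ as a subgraph, with parts $\{(u_1,0), (u_2,0), (u_3,0), (u_4,0)\}$ and $\{(0,v_1), (0,v_2), (a,v_1), (a,v_2), (b,v_1), (b,v_2), (c,v_1), (c,v_2)\}$. -/

import Mathlib

/-- Adjacency in the cozero-divisor graph `Γ'(R)`: both elements are vertices
(non-zero non-units) and neither lies in the principal ideal generated by the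
other. -/
def cozeroAdj {R : Type*} [CommRing R] (x y : R) : Prop :=
  (x ≠ 0 ∧ ¬ IsUnit x) ∧ (y ≠ 0 ∧ ¬ IsUnit y) ∧
    x ∉ Ideal.span {y} ∧ y ∉ Ideal.span {x}

/-!
Two elements are adjacent in `Γ'(R)` exactly when neither divides the other: everything divides
zero and a unit divides everything, so incomparable elements are automatically vertices. In a
product ring, `(u, n)` and `(m, v)` with `u`, `v` units and `m`, `n` non-units are incomparable,
because a divisor of a unit is a unit.
-/

theorem cozeroAdj_iff_not_dvd {R : Type*} [CommRing R] {x y : R} :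
    cozeroAdj x y ↔ ¬ x ∣ y ∧ ¬ y ∣ x := by
  simp only [cozeroAdj, Ideal.mem_span_singleton]
  constructor
  · rintro ⟨-, -, hyx, hxy⟩
    exact ⟨hxy, hyx⟩
  · rintro ⟨hxy, hyx⟩
    refine ⟨⟨?_, fun hx => hxy hx.dvd⟩, ⟨?_, fun hy => hyx hy.dvd⟩, hyx, hxy⟩
    · rintro rfl
      exact hyx (dvd_zero y)
    · rintro rfl
      exact hxy (dvd_zero x)

theorem cozeroAdj.ne {R : Type*} [CommRing R] {x y : R} (h : cozeroAdj x y) : x ≠ y :=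
  fun hxy => (cozeroAdj_iff_not_dvd.1 h).1 hxy.dvd

theorem cozeroAdj_mk_mk {R S : Type*} [CommRing R] [CommRing S] {u m : R} {n v : S}
    (hu : IsUnit u) (hn : ¬ IsUnit n) (hm : ¬ IsUnit m) (hv : IsUnit v) :
    cozeroAdj (u, n) (m, v) :=
  cozeroAdj_iff_not_dvd.2
    ⟨fun h => hn (isUnit_of_dvd_unit (Prod.mk_dvd_mk.1 h).2 hv),
      fun h => hm (isUnit_of_dvd_unit (Prod.mk_dvd_mk.1 h).1 hu)⟩

theorem stmt8_general {R S ι κ τ β : Type*} [CommRing R] [CommRing S]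
    {u : ι → R} (hu : ∀ i, IsUnit (u i)) (hu_inj : Function.Injective u)
    {n : S} (hn : ¬ IsUnit n)
    {m : κ → R} (hm : ∀ k, ¬ IsUnit (m k)) (hm_inj : Function.Injective m)
    {v : τ → S} (hv : ∀ l, IsUnit (v l)) (hv_inj : Function.Injective v)
    (e : β ↪ κ × τ) {A : ι → R × S} {B : β → R × S}
    (hA : ∀ i, A i = (u i, n)) (hB : ∀ j, B j = (m (e j).1, v (e j).2)) :
    Function.Injective A ∧ Function.Injective B ∧ (∀ i j, A i ≠ B j) ∧
      ∀ i j, cozeroAdj (A i) (B j) := by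
  obtain rfl : A = fun i => (u i, n) := funext hA
  obtain rfl : B = Prod.map m v ∘ e := funext hB
  have hadj : ∀ i j, cozeroAdj (u i, n) (Prod.map m v (e j)) := fun i j =>
    cozeroAdj_mk_mk (hu i) hn (hm (e j).1) (hv (e j).2)
  exact ⟨(Prod.mk_left_injective n).comp hu_inj, (hm_inj.prodMap hv_inj).comp e.injective,
    fun i j => (hadj i j).ne, hadj⟩

/-- Let `R₁` be a commutative local ring with four distinct units
`u₁, …, u₄` and three distinct non-zero elements `a, b, c` of its maximal
ideal, and let `F` be a field with `|F| ≥ 3` and distinct units `v₁, v₂`.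
Then `Γ'(R₁ × F)` contains `K_{4,8}` as a subgraph with the indicated parts. -/
theorem stmt8 (R₁ F : Type*) [CommRing R₁] [IsLocalRing R₁] [Field F]
    (u₁ u₂ u₃ u₄ : R₁)
    (hu₁ : IsUnit u₁) (hu₂ : IsUnit u₂) (hu₃ : IsUnit u₃) (hu₄ : IsUnit u₄)
    (hu : ([u₁, u₂, u₃, u₄] : List R₁).Pairwise (· ≠ ·))
    (a b c : R₁) (ha : a ∈ IsLocalRing.maximalIdeal R₁)
    (hb : b ∈ IsLocalRing.maximalIdeal R₁) (hc : c ∈ IsLocalRing.maximalIdeal R₁)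
    (ha0 : a ≠ 0) (hb0 : b ≠ 0) (hc0 : c ≠ 0)
    (habc : ([a, b, c] : List R₁).Pairwise (· ≠ ·))
    (hF : 3 ≤ Cardinal.mk F)
    (v₁ v₂ : F) (hv₁ : IsUnit v₁) (hv₂ : IsUnit v₂) (hv : v₁ ≠ v₂)
    (A : Fin 4 → R₁ × F) (B : Fin 8 → R₁ × F)
    (hA : A = ![(u₁, 0), (u₂, 0), (u₃, 0), (u₄, 0)])
    (hB : B = ![(0, v₁), (0, v₂), (a, v₁), (a, v₂), (b, v₁), (b, v₂), (c, v₁), (c, v₂)]) :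
    Function.Injective A ∧ Function.Injective B ∧ (∀ i j, A i ≠ B j) ∧
      ∀ i j, cozeroAdj (A i) (B j) := by
  have hu_unit : ∀ i, IsUnit (![u₁, u₂, u₃, u₄] i) := by
    simp [Fin.forall_fin_succ, hu₁, hu₂, hu₃, hu₄]
  have hu_inj : Function.Injective ![u₁, u₂, u₃, u₄] := List.nodup_ofFn.1 hu
  have hm_nonunit : ∀ k, ¬ IsUnit (![0, a, b, c] k) := by
    simpa [Fin.forall_fin_succ] using And.intro ha ⟨hb, hc⟩
  have hm_inj : Function.Injective ![0, a, b, c] :=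
    List.nodup_ofFn.1 (List.nodup_cons.2 ⟨by simp [ha0.symm, hb0.symm, hc0.symm], habc⟩)
  have hv_unit : ∀ l, IsUnit (![v₁, v₂] l) := Fin.forall_fin_two.2 ⟨hv₁, hv₂⟩
  have hv_inj : Function.Injective ![v₁, v₂] := injective_pair_iff_ne.2 hv
  subst hA hB
  exact stmt8_general hu_unit hu_inj not_isUnit_zero hm_nonunit hm_inj hv_unit hv_inj
    finProdFinEquiv.symm.toEmbedding (by intro i; fin_cases i <;> rfl)
    (by intro j; fin_cases j <;> rfl)
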